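/- arXiv:1312.2582 — 3 statements merged into one kernel-verified Lean document; each statement's English description precedes it below -/
import Mathlib

section
/- For every a > 0, as x → 0⁺ one has the asymptotic expansion S_a(x) = −π/2 + a·(1 − γ)·x − a·x·ln(a·x) + O(x²); that is, the function x ↦ S_a(x) + π/2 − a(1 − γ)x + a·x·ln(a·x) is O(x²) as x → 0⁺. -/
open Filter MeasureTheory Topology

/-- The sine integral `si(x) = -∫_x^∞ sin t / t dt`, defined via the improper
(limit of interval integrals) form. -/
noncomputable def si (x : ℝ) : ℝ :=
  - limUnder Filter.atTop (fun R : ℝ => ∫ t in x..R, Real.sin t / t)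

/-- The cosine integral `ci(x) = -∫_x^∞ cos t / t dt`, defined via the improper
(limit of interval integrals) form. -/
noncomputable def ci (x : ℝ) : ℝ :=
  - limUnder Filter.atTop (fun R : ℝ => ∫ t in x..R, Real.cos t / t)

/-- The kernel `S_a(x) = sign(x) (si(a|x|) cos(a|x|) - ci(a|x|) sin(a|x|))`, with `S_a(0)=0`. -/
noncomputable def Sker (a x : ℝ) : ℝ :=
  Real.sign x * (si (a * |x|) * Real.cos (a * |x|) - ci (a * |x|) * Real.sin (a * |x|))

/-- The kernel `T_a(x) = si(a|x|) sin(a|x|) + ci(a|x|) cos(a|x|)`. -/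
noncomputable def Tker (a x : ℝ) : ℝ :=
  si (a * |x|) * Real.sin (a * |x|) + ci (a * |x|) * Real.cos (a * |x|)

/-- The Laplace transform `∫_0^∞ h(t) e^{-yt} dt`. -/
noncomputable def laplaceTransform (h : ℝ → ℝ) (y : ℝ) : ℝ :=
  ∫ t in Set.Ioi 0, h t * Real.exp (-y * t)

lemma integrableOn_laplace_of_le_one {h : ℝ → ℝ} (hc : Continuous h)
    (hb : ∀ t, 0 < t → |h t| ≤ 1) {y : ℝ} (hy : 0 < y) :
    IntegrableOn (fun t => h t * Real.exp (-y * t)) (Set.Ioi 0) := by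
  refine Integrable.mono' (exp_neg_integrableOn_Ioi 0 hy)
    (by fun_prop : Continuous fun t => h t * Real.exp (-y * t)).aestronglyMeasurable ?_
  refine (ae_restrict_iff' measurableSet_Ioi).2 (ae_of_all _ fun t ht => ?_)
  rw [norm_mul, Real.norm_eq_abs, Real.norm_eq_abs, Real.abs_exp]
  exact mul_le_of_le_one_left (Real.exp_pos _).le (hb t ht)

lemma abs_laplaceTransform_le {h : ℝ → ℝ}
    (hb : ∀ t, 0 < t → |h t| ≤ 1) {y : ℝ} (hy : 0 < y) :
    |laplaceTransform h y| ≤ 1 / y := by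
  have h1 : ∫ t in Set.Ioi (0 : ℝ), Real.exp (-y * t) = 1 / y := by
    rw [integral_exp_mul_Ioi (by linarith)]
    simp
  rw [← h1, ← Real.norm_eq_abs, laplaceTransform]
  refine norm_integral_le_of_norm_le (exp_neg_integrableOn_Ioi 0 hy) ?_
  refine (ae_restrict_iff' measurableSet_Ioi).2 (ae_of_all _ fun t ht => ?_)
  rw [norm_mul, Real.norm_eq_abs, Real.norm_eq_abs, Real.abs_exp]
  exact mul_le_of_le_one_left (Real.exp_pos _).le (hb t ht)

lemma tendsto_laplaceTransform_atTop {h : ℝ → ℝ} (hb : ∀ t, 0 < t → |h t| ≤ 1) :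
    Tendsto (laplaceTransform h) atTop (𝓝 0) := by
  refine squeeze_zero_norm' ?_ tendsto_inv_atTop_zero
  filter_upwards [eventually_gt_atTop 0] with y hy
  simpa using abs_laplaceTransform_le hb hy

lemma hasDerivAt_laplaceTransform {h : ℝ → ℝ} (hc : Continuous h)
    (hb : ∀ t, 0 < t → |h t| ≤ 1) (hb' : ∀ t, 0 < t → |t * h t| ≤ 1) {y : ℝ} (hy : 0 < y) :
    HasDerivAt (laplaceTransform h) (-laplaceTransform (fun t => t * h t) y) y := by
  have key := (hasDerivAt_integral_of_dominated_loc_of_deriv_le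
    (μ := volume.restrict (Set.Ioi (0 : ℝ)))
    (F := fun y t => h t * Real.exp (-y * t))
    (F' := fun y t => -((t * h t) * Real.exp (-y * t)))
    (x₀ := y) (s := Set.Ioi (y / 2)) (bound := fun t => Real.exp (-(y / 2) * t))
    (Ioi_mem_nhds (by linarith))
    (Eventually.of_forall fun x =>
      (by fun_prop : Continuous fun t => h t * Real.exp (-x * t)).aestronglyMeasurable)
    (integrableOn_laplace_of_le_one hc hb hy)
    (by fun_prop : Continuous fun t => -((t * h t) * Real.exp (-y * t))).aestronglyMeasurable ?_
    (exp_neg_integrableOn_Ioi 0 (by linarith)) ?_).2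
  · rw [integral_neg] at key
    exact key
  · refine (ae_restrict_iff' measurableSet_Ioi).2 (ae_of_all _ fun t ht x hx => ?_)
    rw [norm_neg, norm_mul, Real.norm_eq_abs, Real.norm_eq_abs, Real.abs_exp]
    refine (mul_le_of_le_one_left (Real.exp_pos _).le (hb' t ht)).trans ?_
    have h1 : y / 2 < x := hx
    have h2 : 0 < t := ht
    exact Real.exp_le_exp.2 (by nlinarith)
  · refine ae_of_all _ fun t x _ => ?_
    have h1 : HasDerivAt (fun x : ℝ => -x * t) (-1 * t) x := (hasDerivAt_neg x).mul_const t
    exact (h1.exp.const_mul (h t)).congr_deriv (by ring)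

/-- The auxiliary function `∫_0^∞ e^{-yt} / (1 + t²) dt` of the trigonometric integrals. -/
noncomputable def auxF : ℝ → ℝ := laplaceTransform fun t => (1 + t ^ 2)⁻¹

/-- The auxiliary function `∫_0^∞ t e^{-yt} / (1 + t²) dt` of the trigonometric integrals. -/
noncomputable def auxG : ℝ → ℝ := laplaceTransform fun t => t * (1 + t ^ 2)⁻¹

lemma continuous_inv_one_add_sq : Continuous fun t : ℝ => (1 + t ^ 2)⁻¹ :=
  Continuous.inv₀ (by fun_prop) fun t => by positivity

lemma abs_inv_one_add_sq_le (t : ℝ) : |(1 + t ^ 2)⁻¹| ≤ 1 := by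
  rw [abs_of_nonneg (by positivity)]
  exact inv_le_one_of_one_le₀ (by nlinarith)

lemma abs_mul_inv_one_add_sq_le (t : ℝ) : |t * (1 + t ^ 2)⁻¹| ≤ 1 := by
  rw [abs_mul, abs_of_nonneg (a := (1 + t ^ 2)⁻¹) (by positivity), ← div_eq_mul_inv,
    div_le_one (by positivity)]
  nlinarith [sq_abs t, sq_nonneg (|t| - 1)]

lemma abs_mul_mul_inv_one_add_sq_le (t : ℝ) : |t * (t * (1 + t ^ 2)⁻¹)| ≤ 1 := by
  rw [abs_of_nonneg (by rw [← mul_assoc, ← sq]; positivity), ← mul_assoc, ← sq, ← div_eq_mul_inv,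
    div_le_one (by positivity)]
  linarith

lemma hasDerivAt_auxF {y : ℝ} (hy : 0 < y) : HasDerivAt auxF (-auxG y) y :=
  hasDerivAt_laplaceTransform continuous_inv_one_add_sq (fun t _ => abs_inv_one_add_sq_le t)
    (fun t _ => abs_mul_inv_one_add_sq_le t) hy

lemma hasDerivAt_auxG {y : ℝ} (hy : 0 < y) : HasDerivAt auxG (auxF y - 1 / y) y := by
  have hc : Continuous fun t : ℝ => t * (1 + t ^ 2)⁻¹ :=
    continuous_id.mul continuous_inv_one_add_sq
  refine (hasDerivAt_laplaceTransform hc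
    (fun t _ => abs_mul_inv_one_add_sq_le t)
    (fun t _ => abs_mul_mul_inv_one_add_sq_le t) hy).congr_deriv ?_
  have h1 : ∫ t in Set.Ioi (0 : ℝ), Real.exp (-y * t) = 1 / y := by
    rw [integral_exp_mul_Ioi (by linarith)]
    simp
  rw [auxF, ← h1, laplaceTransform, laplaceTransform, ← integral_sub
    (integrableOn_laplace_of_le_one continuous_inv_one_add_sq
      (fun t _ => abs_inv_one_add_sq_le t) hy) (exp_neg_integrableOn_Ioi 0 hy), ← integral_neg]
  congr 1 with t
  have : 1 + t ^ 2 ≠ 0 := by positivity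
  field_simp
  ring

lemma tendsto_auxF_atTop : Tendsto auxF atTop (𝓝 0) :=
  tendsto_laplaceTransform_atTop fun t _ => abs_inv_one_add_sq_le t

lemma tendsto_auxG_atTop : Tendsto auxG atTop (𝓝 0) :=
  tendsto_laplaceTransform_atTop fun t _ => abs_mul_inv_one_add_sq_le t

lemma tendsto_mul_add_mul_of_abs_le_one {u v p q : ℝ → ℝ} {l : Filter ℝ}
    (hu : ∀ x, |u x| ≤ 1) (hv : ∀ x, |v x| ≤ 1) (hp : Tendsto p l (𝓝 0)) (hq : Tendsto q l (𝓝 0)) :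
    Tendsto (fun x => u x * p x + v x * q x) l (𝓝 0) := by
  have h := (bdd_le_mul_tendsto_zero' 1 (Eventually.of_forall hu) hp).add
    (bdd_le_mul_tendsto_zero' 1 (Eventually.of_forall hv) hq)
  simpa using h

lemma si_eq {y : ℝ} (hy : 0 < y) :
    si y = -(Real.cos y * auxF y + Real.sin y * auxG y) := by
  rw [si, neg_inj]
  refine Tendsto.limUnder_eq ?_
  have h0 := (tendsto_mul_add_mul_of_abs_le_one Real.abs_cos_le_one Real.abs_sin_le_one
    tendsto_auxF_atTop tendsto_auxG_atTop).const_sub (Real.cos y * auxF y + Real.sin y * auxG y)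
  rw [sub_zero] at h0
  refine h0.congr' ?_
  filter_upwards [eventually_ge_atTop y] with R hR
  have hpos : ∀ x ∈ Set.uIcc y R, 0 < x := fun x hx => by
    rw [Set.uIcc_of_le hR] at hx
    exact hy.trans_le hx.1
  rw [intervalIntegral.integral_eq_sub_of_hasDerivAt
    (f := fun x => -(Real.cos x * auxF x + Real.sin x * auxG x))]
  · ring
  · intro x hx
    have hx0 := hpos x hx
    refine ((((Real.hasDerivAt_cos x).mul (hasDerivAt_auxF hx0)).add
      ((Real.hasDerivAt_sin x).mul (hasDerivAt_auxG hx0))).neg).congr_deriv ?_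
    ring
  · refine ContinuousOn.intervalIntegrable ?_
    exact Real.continuous_sin.continuousOn.div continuousOn_id fun x hx => (hpos x hx).ne'

lemma ci_eq {y : ℝ} (hy : 0 < y) :
    ci y = -(Real.cos y * auxG y - Real.sin y * auxF y) := by
  rw [ci, neg_inj]
  refine Tendsto.limUnder_eq ?_
  have h0 := (tendsto_mul_add_mul_of_abs_le_one Real.abs_cos_le_one
    (v := fun x => -Real.sin x) (fun x => by rw [abs_neg]; exact Real.abs_sin_le_one x)
    tendsto_auxG_atTop tendsto_auxF_atTop).const_sub (Real.cos y * auxG y - Real.sin y * auxF y)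
  rw [sub_zero] at h0
  refine h0.congr' ?_
  filter_upwards [eventually_ge_atTop y] with R hR
  have hpos : ∀ x ∈ Set.uIcc y R, 0 < x := fun x hx => by
    rw [Set.uIcc_of_le hR] at hx
    exact hy.trans_le hx.1
  rw [intervalIntegral.integral_eq_sub_of_hasDerivAt
    (f := fun x => -(Real.cos x * auxG x - Real.sin x * auxF x))]
  · ring
  · intro x hx
    have hx0 := hpos x hx
    refine ((((Real.hasDerivAt_cos x).mul (hasDerivAt_auxG hx0)).sub
      ((Real.hasDerivAt_sin x).mul (hasDerivAt_auxF hx0))).neg).congr_deriv ?_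
    ring
  · refine ContinuousOn.intervalIntegrable ?_
    exact Real.continuous_cos.continuousOn.div continuousOn_id fun x hx => (hpos x hx).ne'

lemma Sker_eq_neg_auxF {a x : ℝ} (ha : 0 < a) (hx : 0 < x) : Sker a x = -auxF (a * x) := by
  rw [Sker, Real.sign_of_pos hx, abs_of_pos hx, si_eq (mul_pos ha hx), ci_eq (mul_pos ha hx)]
  linear_combination -auxF (a * x) * Real.sin_sq_add_cos_sq (a * x)

lemma auxF_nonneg (y : ℝ) : 0 ≤ auxF y :=
  integral_nonneg fun t => by positivity

lemma auxF_le_pi_div_two {y : ℝ} (hy : 0 < y) : auxF y ≤ Real.pi / 2 := by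
  have h1 : ∫ t in Set.Ioi (0 : ℝ), (1 + t ^ 2)⁻¹ = Real.pi / 2 := by
    simp [integral_Ioi_inv_one_add_sq]
  rw [← h1]
  refine setIntegral_mono_on (integrableOn_laplace_of_le_one continuous_inv_one_add_sq
      (fun t _ => abs_inv_one_add_sq_le t) hy) integrable_inv_one_add_sq.integrableOn
      measurableSet_Ioi fun t ht => ?_
  have h2 : 0 < t := ht
  exact mul_le_of_le_one_right (by positivity) (Real.exp_le_one_iff.2 (by nlinarith))

lemma tendsto_auxF_nhdsGT_zero : Tendsto auxF (𝓝[>] 0) (𝓝 (Real.pi / 2)) := by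
  have h1 : ∫ t in Set.Ioi (0 : ℝ), (1 + t ^ 2)⁻¹ = Real.pi / 2 := by
    simp [integral_Ioi_inv_one_add_sq]
  rw [← h1]
  refine tendsto_integral_filter_of_dominated_convergence (fun t => (1 + t ^ 2)⁻¹)
    (Eventually.of_forall fun x =>
      (continuous_inv_one_add_sq.mul (by fun_prop)).aestronglyMeasurable) ?_
    integrable_inv_one_add_sq.integrableOn ?_
  · filter_upwards [self_mem_nhdsWithin] with y hy
    refine (ae_restrict_iff' measurableSet_Ioi).2 (ae_of_all _ fun t ht => ?_)
    have h2 : 0 < t := ht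
    have h3 : 0 < y := hy
    rw [Real.norm_of_nonneg (by positivity)]
    exact mul_le_of_le_one_right (by positivity) (Real.exp_le_one_iff.2 (by nlinarith))
  · refine ae_of_all _ fun t => ?_
    have h2 : Continuous fun y : ℝ => (1 + t ^ 2)⁻¹ * Real.exp (-y * t) := by fun_prop
    simpa using (h2.tendsto 0).mono_left nhdsWithin_le_nhds

lemma abs_log_le_of_pos {s : ℝ} (hs : 0 < s) : |Real.log s| ≤ s + 2 * s ^ (-(1 / 2) : ℝ) := by
  have h1 := Real.log_le_self hs.le
  have h2 := Real.log_le_self (Real.rpow_pos_of_pos hs (-(1 / 2))).le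
  have h3 := Real.rpow_pos_of_pos hs (-(1 / 2))
  rw [Real.log_rpow hs] at h2
  exact abs_le.2 ⟨by linarith, by linarith⟩

lemma integrableOn_log_bound : IntegrableOn
    (fun s : ℝ => (2 * s + 2 * s ^ (-(1 / 2) : ℝ)) * Real.exp (-s)) (Set.Ioi 0) := by
  have h1 := (Real.GammaIntegral_convergent (s := 2) two_pos).const_mul 2
  have h2 := (Real.GammaIntegral_convergent (s := 1 / 2) (by norm_num)).const_mul 2
  refine (h1.add h2).congr (ae_of_all _ fun s => ?_)
  simp only [Pi.add_apply]
  norm_num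
  ring

lemma integral_log_mul_exp_neg :
    ∫ s in Set.Ioi (0 : ℝ), Real.log s * Real.exp (-s) = -Real.eulerMascheroniConstant := by
  have h1 := Complex.hasDerivAt_GammaIntegral (s := 1) (by simp)
  have h2 : HasDerivAt Complex.GammaIntegral (-(Real.eulerMascheroniConstant : ℂ)) 1 := by
    refine Complex.hasDerivAt_Gamma_one.congr_of_eventuallyEq ?_
    have : {z : ℂ | 0 < z.re} ∈ 𝓝 (1 : ℂ) :=
      (isOpen_lt continuous_const Complex.continuous_re).mem_nhds (by simp)
    filter_upwards [this] with z hz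
    exact (Complex.Gamma_eq_integral hz).symm
  have h3 := h1.unique h2
  simp only [sub_self, Complex.cpow_zero, one_mul] at h3
  have h4 : ((∫ s in Set.Ioi (0 : ℝ), Real.log s * Real.exp (-s) : ℝ) : ℂ)
      = ((-Real.eulerMascheroniConstant : ℝ) : ℂ) := by
    rw [← integral_complex_ofReal]
    push_cast
    push_cast at h3
    exact h3
  exact_mod_cast h4

/-- The function `∫_0^∞ log √(y² + s²) e^{-s} ds`. -/
noncomputable def logIntegral (y : ℝ) : ℝ :=
  ∫ s in Set.Ioi (0 : ℝ), Real.log (y ^ 2 + s ^ 2) / 2 * Real.exp (-s)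

lemma abs_log_sq_add_sq_le {y s : ℝ} (hy1 : |y| ≤ 1) (hs : 0 < s) :
    |Real.log (y ^ 2 + s ^ 2) / 2| ≤ 2 * s + 2 * s ^ (-(1 / 2) : ℝ) := by
  have h1 := abs_le.1 (abs_log_le_of_pos hs)
  have h3 := Real.rpow_pos_of_pos hs (-(1 / 2))
  have hy2 : y ^ 2 ≤ 1 := (sq_le_one_iff_abs_le_one y).2 hy1
  have h4 : Real.log (s ^ 2) ≤ Real.log (y ^ 2 + s ^ 2) :=
    Real.log_le_log (by positivity) (by nlinarith)
  have h5 : Real.log (y ^ 2 + s ^ 2) ≤ Real.log ((1 + s) ^ 2) :=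
    Real.log_le_log (by positivity) (by nlinarith)
  have h6 := Real.log_le_sub_one_of_pos (show 0 < 1 + s by linarith)
  rw [Real.log_pow] at h4 h5
  push_cast at h4 h5
  exact abs_le.2 ⟨by linarith, by linarith⟩

lemma measurable_log_integrand (y : ℝ) :
    Measurable fun s : ℝ => Real.log (y ^ 2 + s ^ 2) / 2 * Real.exp (-s) := by
  fun_prop

lemma tendsto_logIntegral :
    Tendsto logIntegral (𝓝[>] 0) (𝓝 (-Real.eulerMascheroniConstant)) := by
  rw [← integral_log_mul_exp_neg]
  refine tendsto_integral_filter_of_dominated_convergence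
    (fun s : ℝ => (2 * s + 2 * s ^ (-(1 / 2) : ℝ)) * Real.exp (-s))
    (Eventually.of_forall fun y => (measurable_log_integrand y).aestronglyMeasurable) ?_
    integrableOn_log_bound ?_
  · filter_upwards [Ioo_mem_nhdsGT one_pos] with y hy
    refine (ae_restrict_iff' measurableSet_Ioi).2 (ae_of_all _ fun s hs => ?_)
    rw [norm_mul, Real.norm_eq_abs, Real.norm_eq_abs, Real.abs_exp]
    refine mul_le_mul_of_nonneg_right (abs_log_sq_add_sq_le ?_ hs) (Real.exp_pos _).le
    exact abs_le.2 ⟨by linarith [hy.1], hy.2.le⟩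
  · refine (ae_restrict_iff' measurableSet_Ioi).2 (ae_of_all _ fun s hs => ?_)
    have hs0 : s ≠ 0 := ne_of_gt hs
    have h1 : ContinuousAt (fun y : ℝ => Real.log (y ^ 2 + s ^ 2) / 2 * Real.exp (-s)) 0 := by
      refine ContinuousAt.mul (ContinuousAt.div_const (ContinuousAt.log (by fun_prop) ?_) 2)
        continuousAt_const
      positivity
    have h2 := h1.tendsto.mono_left (nhdsWithin_le_nhds (s := Set.Ioi 0))
    have h3 : Real.log ((0 : ℝ) ^ 2 + s ^ 2) / 2 = Real.log s := by
      rw [zero_pow two_ne_zero, zero_add, Real.log_pow]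
      push_cast
      ring
    rwa [h3] at h2

lemma auxG_add_log_eq {y : ℝ} (hy : 0 < y) (hy1 : y ≤ 1) :
    auxG y + Real.log y = logIntegral y := by
  have hG : auxG y = ∫ s in Set.Ioi (0 : ℝ), s / (y ^ 2 + s ^ 2) * Real.exp (-s) := by
    have h := integral_comp_mul_left_Ioi
      (fun s : ℝ => s / (y ^ 2 + s ^ 2) * Real.exp (-s)) 0 hy
    rw [mul_zero, smul_eq_mul, eq_inv_mul_iff_mul_eq₀ hy.ne', ← integral_const_mul] at h
    rw [← h, auxG, laplaceTransform]
    congr 1 with t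
    have : 1 + t ^ 2 ≠ 0 := by positivity
    have : y ^ 2 + (y * t) ^ 2 ≠ 0 := by positivity
    rw [neg_mul, ← mul_assoc]
    congr 1
    field_simp
  have hi1 : IntegrableOn (fun s : ℝ => s / (y ^ 2 + s ^ 2) * Real.exp (-s)) (Set.Ioi 0) := by
    have h0 : Continuous fun s : ℝ => s / (y ^ 2 + s ^ 2) :=
      continuous_id.div (by fun_prop) fun s => by positivity
    refine Integrable.mono' ((integrableOn_exp_neg_Ioi 0).const_mul (1 / y))
      (h0.mul (by fun_prop)).aestronglyMeasurable
      ((ae_restrict_iff' measurableSet_Ioi).2 (ae_of_all _ fun s hs => ?_))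
    have hs0 : 0 < s := hs
    rw [Real.norm_of_nonneg (by positivity)]
    refine mul_le_mul_of_nonneg_right ?_ (Real.exp_pos _).le
    rw [div_le_div_iff₀ (by positivity) hy]
    nlinarith [sq_nonneg (y - s)]
  have hi2 : IntegrableOn (fun s : ℝ => Real.log (y ^ 2 + s ^ 2) / 2 * Real.exp (-s))
      (Set.Ioi 0) := by
    refine Integrable.mono' integrableOn_log_bound
      (measurable_log_integrand y).aestronglyMeasurable
      ((ae_restrict_iff' measurableSet_Ioi).2 (ae_of_all _ fun s hs => ?_))
    rw [norm_mul, Real.norm_eq_abs, Real.norm_eq_abs, Real.abs_exp]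
    refine mul_le_mul_of_nonneg_right (abs_log_sq_add_sq_le ?_ hs) (Real.exp_pos _).le
    exact abs_le.2 ⟨by linarith, hy1⟩
  have hd : ∀ s : ℝ, HasDerivAt (fun s => Real.log (y ^ 2 + s ^ 2) / 2 * Real.exp (-s))
      (s / (y ^ 2 + s ^ 2) * Real.exp (-s) - Real.log (y ^ 2 + s ^ 2) / 2 * Real.exp (-s)) s := by
    intro s
    have h0 : y ^ 2 + s ^ 2 ≠ 0 := by positivity
    have h1 : HasDerivAt (fun s : ℝ => y ^ 2 + s ^ 2) (2 * s) s := by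
      simpa using (hasDerivAt_pow 2 s).const_add (y ^ 2)
    refine (((h1.log h0).div_const 2).mul (hasDerivAt_neg s).exp).congr_deriv ?_
    field_simp
    ring
  have hlim : Tendsto (fun s : ℝ => Real.log (y ^ 2 + s ^ 2) / 2 * Real.exp (-s)) atTop (𝓝 0) := by
    have h1 := (Real.tendsto_pow_mul_exp_neg_atTop_nhds_zero 1).const_mul 4
    rw [mul_zero] at h1
    refine squeeze_zero_norm' ?_ h1
    filter_upwards [eventually_ge_atTop 1] with s hs
    rw [norm_mul, Real.norm_eq_abs, Real.norm_eq_abs, Real.abs_exp, pow_one, ← mul_assoc]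
    refine mul_le_mul_of_nonneg_right ?_ (Real.exp_pos _).le
    refine (abs_log_sq_add_sq_le (abs_le.2 ⟨by linarith, hy1⟩) (by linarith)).trans ?_
    have := Real.rpow_le_one_of_one_le_of_nonpos hs (show (-(1 / 2) : ℝ) ≤ 0 by norm_num)
    linarith
  have hFTC := integral_Ioi_of_hasDerivAt_of_tendsto (a := (0 : ℝ))
    (hd 0).continuousAt.continuousWithinAt (fun s _ => hd s) (hi1.sub hi2) hlim
  rw [integral_sub hi1 hi2, ← hG] at hFTC
  simp only [ne_eq, OfNat.ofNat_ne_zero, not_false_eq_true, zero_pow, add_zero, Real.log_pow,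
    neg_zero, Real.exp_zero, mul_one] at hFTC
  push_cast at hFTC
  rw [logIntegral]
  linarith

lemma abs_sub_le_of_hasDerivAt_of_tendsto {u u' : ℝ → ℝ} {l C y : ℝ} (hy : 0 < y)
    (hu : ∀ x, 0 < x → HasDerivAt u (u' x) x) (hC : ∀ x, 0 < x → x ≤ y → |u' x| ≤ C)
    (hl : Tendsto u (𝓝[>] 0) (𝓝 l)) : |u y - l| ≤ C * y := by
  have h1 : Tendsto (fun z => |u y - u z|) (𝓝[>] 0) (𝓝 |u y - l|) := (hl.const_sub (u y)).abs
  refine le_of_tendsto h1 ?_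
  filter_upwards [Ioo_mem_nhdsGT hy] with z hz
  have h2 := Convex.norm_image_sub_le_of_norm_hasDerivWithin_le (f := u) (f' := u')
    (s := Set.Icc z y) (x := z) (y := y) (C := C)
    (fun x hx => (hu x (hz.1.trans_le hx.1)).hasDerivWithinAt)
    (fun x hx => hC x (hz.1.trans_le hx.1) hx.2) (convex_Icc z y)
    (Set.left_mem_Icc.2 hz.2.le) (Set.right_mem_Icc.2 hz.2.le)
  rw [Real.norm_eq_abs, Real.norm_of_nonneg (by linarith [hz.2])] at h2
  have h3 : 0 ≤ C := (abs_nonneg _).trans (hC y hy le_rfl)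
  exact h2.trans (mul_le_mul_of_nonneg_left (by linarith [hz.1]) h3)

lemma abs_auxG_add_log_add_eulerMascheroni_le {y : ℝ} (hy : 0 < y) :
    |auxG y + Real.log y + Real.eulerMascheroniConstant| ≤ Real.pi / 2 * y := by
  have hl : Tendsto (fun x => auxG x + Real.log x) (𝓝[>] 0)
      (𝓝 (-Real.eulerMascheroniConstant)) := by
    refine tendsto_logIntegral.congr' ?_
    filter_upwards [Ioo_mem_nhdsGT one_pos] with x hx
    exact (auxG_add_log_eq hx.1 hx.2.le).symm
  have h := abs_sub_le_of_hasDerivAt_of_tendsto (u' := auxF) (C := Real.pi / 2) hy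
    (fun x hx => ((hasDerivAt_auxG hx).add (Real.hasDerivAt_log hx.ne')).congr_deriv
      (by rw [one_div]; ring))
    (fun x hx _ => by rw [abs_of_nonneg (auxF_nonneg x)]; exact auxF_le_pi_div_two hx) hl
  rwa [sub_neg_eq_add] at h

lemma abs_auxF_sub_expansion_le {y : ℝ} (hy : 0 < y) :
    |auxF y + (1 - Real.eulerMascheroniConstant) * y - y * Real.log y - Real.pi / 2|
      ≤ Real.pi / 2 * y ^ 2 := by
  have hl : Tendsto (fun x => auxF x + (1 - Real.eulerMascheroniConstant) * x - x * Real.log x)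
      (𝓝[>] 0) (𝓝 (Real.pi / 2)) := by
    have h1 : Continuous fun x : ℝ =>
        (1 - Real.eulerMascheroniConstant) * x - x * Real.log x :=
      (by fun_prop : Continuous fun x : ℝ => (1 - Real.eulerMascheroniConstant) * x).sub
        Real.continuous_mul_log
    have h2 := tendsto_auxF_nhdsGT_zero.add
      ((h1.tendsto 0).mono_left (nhdsWithin_le_nhds (s := Set.Ioi 0)))
    simp only [mul_zero, zero_mul, sub_zero, add_zero] at h2
    exact h2.congr fun x => by ring
  have h := abs_sub_le_of_hasDerivAt_of_tendsto
    (u' := fun x => -(auxG x + Real.log x + Real.eulerMascheroniConstant))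
    (C := Real.pi / 2 * y) hy
    (fun x hx => (((hasDerivAt_auxF hx).add ((hasDerivAt_id x).const_mul
      (1 - Real.eulerMascheroniConstant))).sub (Real.hasDerivAt_mul_log hx.ne')).congr_deriv
      (by ring))
    (fun x hx hxy => by
      rw [abs_neg]
      exact (abs_auxG_add_log_add_eulerMascheroni_le hx).trans
        (mul_le_mul_of_nonneg_left hxy (by positivity))) hl
  rw [sq, ← mul_assoc]
  exact h

/-- as `x → 0⁺`,
`S_a(x) = -π/2 + a(1-γ)x - a x ln(a x) + O(x²)`. -/
theorem stmt9 (a : ℝ) (ha : 0 < a) :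
    (fun x : ℝ => Sker a x + Real.pi / 2 - a * (1 - Real.eulerMascheroniConstant) * x
        + a * x * Real.log (a * x))
      =O[nhdsWithin 0 (Set.Ioi 0)] (fun x : ℝ => x ^ 2) := by
  refine Asymptotics.IsBigO.of_bound (Real.pi / 2 * a ^ 2) ?_
  filter_upwards [self_mem_nhdsWithin] with x hx
  have h := abs_auxF_sub_expansion_le (mul_pos ha hx)
  rw [Sker_eq_neg_auxF ha hx, Real.norm_eq_abs, Real.norm_of_nonneg (sq_nonneg x), ← abs_neg]
  convert h using 1
  · congr 1
    ring
  · ring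
end

section
/- Let a > 0 and let f : ℝ → ℝ be a Schwartz function with Fourier transform f̃(ξ) = ∫_{−∞}^{∞} f(x)·e^{iξx} dx. Then for every x ∈ ℝ, (1/2π)·∫_{−∞}^{∞} [a/(|ξ| + a)]·f̃(ξ)·e^{−iξx} dξ = −(a/π)·∫_{−∞}^{∞} T_a(x − t)·f(t) dt. -/
open Filter MeasureTheory Topology

open Set in
lemma integrableOn_exp_neg_mul {c : ℝ} (hc : 0 < c) :
    IntegrableOn (fun s : ℝ => Real.exp (-(c * s))) (Ioi 0) := by
  simpa using exp_neg_integrableOn_Ioi 0 hc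

open Set in
lemma integrableOn_id_mul_exp_neg_mul {c : ℝ} (hc : 0 < c) :
    IntegrableOn (fun s : ℝ => s * Real.exp (-(c * s))) (Ioi 0) := by
  have := integrableOn_rpow_mul_exp_neg_mul_rpow (p := 1) (s := 1) (b := c) (by norm_num)
    one_pos hc
  simpa using this

open Set in
lemma integrableOn_mul_exp_neg_mul {h : ℝ → ℝ} (hm : Continuous h) (hb : ∀ s, |h s| ≤ 1)
    {u : ℝ} (hu : 0 < u) :
    IntegrableOn (fun s : ℝ => h s * Real.exp (-(u * s))) (Ioi 0) := by
  refine (integrableOn_exp_neg_mul hu).mono' (by fun_prop) (Eventually.of_forall fun s => ?_)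
  rw [norm_mul, Real.norm_eq_abs, Real.norm_eq_abs, Real.abs_exp]
  exact mul_le_of_le_one_left (Real.exp_pos _).le (hb s)

open Set in
lemma hasDerivAt_integral_mul_exp_neg_mul {h : ℝ → ℝ} (hm : Continuous h)
    (hb : ∀ s, |h s| ≤ 1) {u : ℝ} (hu : 0 < u) :
    HasDerivAt (fun v : ℝ => ∫ s in Ioi (0 : ℝ), h s * Real.exp (-(v * s)))
      (∫ s in Ioi (0 : ℝ), -(h s * s * Real.exp (-(u * s)))) u := by
  refine (hasDerivAt_integral_of_dominated_loc_of_deriv_le (s := Ioi (u / 2))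
    (F := fun v s => h s * Real.exp (-(v * s)))
    (F' := fun v s => -(h s * s * Real.exp (-(v * s))))
    (bound := fun s => s * Real.exp (-(u / 2 * s))) (Ioi_mem_nhds (by linarith)) ?_
    (integrableOn_mul_exp_neg_mul hm hb hu) ?_ ?_
    (integrableOn_id_mul_exp_neg_mul (by positivity)) ?_).2
  · exact Eventually.of_forall fun v => by fun_prop
  · fun_prop
  · filter_upwards [ae_restrict_mem measurableSet_Ioi] with s hs v hv
    have hs' : 0 < s := hs
    have hv' : u / 2 < v := hv
    rw [norm_neg, norm_mul, norm_mul, Real.norm_eq_abs, Real.norm_eq_abs, Real.norm_eq_abs,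
      Real.abs_exp, abs_of_pos hs']
    gcongr
    exact mul_le_of_le_one_left hs'.le (hb s)
  · refine Eventually.of_forall fun s v _ => ?_
    refine (((((hasDerivAt_id v).mul_const s).neg).exp).const_mul (h s)).congr_deriv ?_
    simp only [Pi.neg_apply, id]
    ring

open Set in
/-- The Laplace transform of `s / (1 + s²)`. -/
noncomputable def laplaceOdd (u : ℝ) : ℝ :=
  ∫ s in Ioi (0 : ℝ), s / (1 + s ^ 2) * Real.exp (-(u * s))

open Set in
/-- The Laplace transform of `1 / (1 + s²)`. -/
noncomputable def laplaceEven (u : ℝ) : ℝ :=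
  ∫ s in Ioi (0 : ℝ), 1 / (1 + s ^ 2) * Real.exp (-(u * s))

lemma continuous_div_one_add_sq : Continuous fun s : ℝ => s / (1 + s ^ 2) :=
  continuous_id.div (by fun_prop) fun s => by positivity

lemma continuous_one_div_one_add_sq : Continuous fun s : ℝ => 1 / (1 + s ^ 2) :=
  continuous_const.div (by fun_prop) fun s => by positivity

lemma abs_div_one_add_sq_le (s : ℝ) : |s / (1 + s ^ 2)| ≤ 1 := by
  rw [abs_div, abs_of_pos (by positivity : (0 : ℝ) < 1 + s ^ 2), div_le_one (by positivity),
    ← sq_abs s]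
  nlinarith [sq_nonneg (|s| - 1), abs_nonneg s]

lemma abs_one_div_one_add_sq_le (s : ℝ) : |1 / (1 + s ^ 2)| ≤ 1 := by
  rw [abs_of_pos (by positivity), div_le_one (by positivity)]
  nlinarith [sq_nonneg s]

open Set in
lemma integral_exp_neg_mul {u : ℝ} (hu : 0 < u) :
    ∫ s in Ioi (0 : ℝ), Real.exp (-(u * s)) = 1 / u := by
  have := integral_exp_mul_Ioi (a := -u) (by linarith) 0
  simp only [neg_mul, mul_zero, Real.exp_zero] at this
  rw [this]; field_simp

open Set in
lemma hasDerivAt_laplaceEven {u : ℝ} (hu : 0 < u) :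
    HasDerivAt laplaceEven (-laplaceOdd u) u := by
  refine (hasDerivAt_integral_mul_exp_neg_mul continuous_one_div_one_add_sq
    abs_one_div_one_add_sq_le hu).congr_deriv ?_
  rw [laplaceOdd, ← integral_neg]
  congr 1; ext s; ring

open Set in
lemma hasDerivAt_laplaceOdd {u : ℝ} (hu : 0 < u) :
    HasDerivAt laplaceOdd (laplaceEven u - 1 / u) u := by
  refine (hasDerivAt_integral_mul_exp_neg_mul continuous_div_one_add_sq
    abs_div_one_add_sq_le hu).congr_deriv ?_
  rw [laplaceEven, ← integral_exp_neg_mul hu, ← integral_sub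
    (integrableOn_mul_exp_neg_mul continuous_one_div_one_add_sq abs_one_div_one_add_sq_le hu)
    (integrableOn_exp_neg_mul hu)]
  congr 1; ext s
  have : 1 + s ^ 2 ≠ 0 := by positivity
  field_simp; ring

open Set in
lemma abs_integral_mul_exp_neg_mul_le {h : ℝ → ℝ} (hb : ∀ s, |h s| ≤ 1) {u : ℝ} (hu : 0 < u) :
    |∫ s in Ioi (0 : ℝ), h s * Real.exp (-(u * s))| ≤ 1 / u := by
  rw [← integral_exp_neg_mul hu, ← Real.norm_eq_abs]
  refine norm_integral_le_of_norm_le (integrableOn_exp_neg_mul hu)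
    (Eventually.of_forall fun s => ?_)
  rw [norm_mul, Real.norm_eq_abs, Real.norm_eq_abs, Real.abs_exp]
  exact mul_le_of_le_one_left (Real.exp_pos _).le (hb s)

lemma tendsto_integral_mul_exp_neg_mul {h : ℝ → ℝ} (hb : ∀ s, |h s| ≤ 1) :
    Tendsto (fun u : ℝ => ∫ s in Set.Ioi (0 : ℝ), h s * Real.exp (-(u * s))) atTop (𝓝 0) := by
  refine squeeze_zero_norm' ?_ (tendsto_const_nhds.div_atTop tendsto_id : Tendsto
    (fun u : ℝ => 1 / u) atTop (𝓝 0))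
  filter_upwards [eventually_gt_atTop 0] with u hu
  exact abs_integral_mul_exp_neg_mul_le hb hu

lemma tendsto_laplaceOdd : Tendsto laplaceOdd atTop (𝓝 0) :=
  tendsto_integral_mul_exp_neg_mul abs_div_one_add_sq_le

lemma tendsto_laplaceEven : Tendsto laplaceEven atTop (𝓝 0) :=
  tendsto_integral_mul_exp_neg_mul abs_one_div_one_add_sq_le

lemma tendsto_mul_of_abs_le_one {l b : ℝ → ℝ} (hl : Tendsto l atTop (𝓝 0))
    (hb : ∀ u, |b u| ≤ 1) : Tendsto (fun u => l u * b u) atTop (𝓝 0) :=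
  hl.zero_mul_isBoundedUnder_le (isBoundedUnder_of ⟨1, hb⟩)

/-- An improper integral from an antiderivative that vanishes at infinity. -/
lemma neg_limUnder_intervalIntegral {F f : ℝ → ℝ} {u : ℝ} (hu : 0 < u)
    (hd : ∀ v, 0 < v → HasDerivAt F (f v) v) (hc : ContinuousOn f (Set.Ioi 0))
    (hF : Tendsto F atTop (𝓝 0)) :
    -limUnder atTop (fun R : ℝ => ∫ t in u..R, f t) = F u := by
  have : Tendsto (fun R : ℝ => ∫ t in u..R, f t) atTop (𝓝 (0 - F u)) := by
    refine (hF.sub_const (F u)).congr' ?_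
    filter_upwards [eventually_ge_atTop u] with R hR
    have hsub : Set.uIcc u R ⊆ Set.Ioi 0 := by
      rw [Set.uIcc_of_le hR]
      exact fun v hv => lt_of_lt_of_le hu hv.1
    exact (intervalIntegral.integral_eq_sub_of_hasDerivAt (fun v hv => hd v (hsub hv))
      (hc.mono hsub).intervalIntegrable).symm
  rw [this.limUnder_eq]; ring

lemma ci_eq_s18 {u : ℝ} (hu : 0 < u) :
    ci u = laplaceEven u * Real.sin u - laplaceOdd u * Real.cos u := by
  refine neg_limUnder_intervalIntegral
    (F := fun u => laplaceEven u * Real.sin u - laplaceOdd u * Real.cos u) hu (fun v hv => ?_)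
    (Real.continuous_cos.continuousOn.div continuousOn_id fun v hv => (ne_of_gt hv)) ?_
  · refine (((hasDerivAt_laplaceEven hv).mul (Real.hasDerivAt_sin v)).sub
      ((hasDerivAt_laplaceOdd hv).mul (Real.hasDerivAt_cos v))).congr_deriv ?_
    ring
  · simpa using (tendsto_mul_of_abs_le_one tendsto_laplaceEven Real.abs_sin_le_one).sub
      (tendsto_mul_of_abs_le_one tendsto_laplaceOdd Real.abs_cos_le_one)

lemma si_eq_s18 {u : ℝ} (hu : 0 < u) :
    si u = -(laplaceEven u * Real.cos u) - laplaceOdd u * Real.sin u := by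
  refine neg_limUnder_intervalIntegral
    (F := fun u => -(laplaceEven u * Real.cos u) - laplaceOdd u * Real.sin u) hu (fun v hv => ?_)
    (Real.continuous_sin.continuousOn.div continuousOn_id fun v hv => (ne_of_gt hv)) ?_
  · refine (((hasDerivAt_laplaceEven hv).mul (Real.hasDerivAt_cos v)).neg.sub
      ((hasDerivAt_laplaceOdd hv).mul (Real.hasDerivAt_sin v))).congr_deriv ?_
    ring
  · simpa using (tendsto_mul_of_abs_le_one tendsto_laplaceEven Real.abs_cos_le_one).neg.sub
      (tendsto_mul_of_abs_le_one tendsto_laplaceOdd Real.abs_sin_le_one)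

lemma Tker_eq {a y : ℝ} (ha : 0 < a) (hy : y ≠ 0) : Tker a y = -laplaceOdd (a * |y|) := by
  have hu : 0 < a * |y| := mul_pos ha (abs_pos.2 hy)
  rw [Tker, si_eq_s18 hu, ci_eq_s18 hu]
  linear_combination -laplaceOdd (a * |y|) * Real.sin_sq_add_cos_sq (a * |y|)

open Set in
lemma integrable_exp_neg_mul_abs {c : ℝ} (hc : 0 < c) :
    Integrable fun y : ℝ => Real.exp (-(c * |y|)) := by
  rw [← integrableOn_univ, ← Iic_union_Ioi (a := (0 : ℝ)), integrableOn_union]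
  constructor
  · refine (integrableOn_exp_mul_Iic hc 0).congr_fun (fun y (hy : y ≤ 0) => ?_) measurableSet_Iic
    simp only [abs_of_nonpos hy, mul_neg, neg_neg]
  · refine (exp_neg_integrableOn_Ioi 0 hc).congr_fun (fun y (hy : 0 < y) => ?_) measurableSet_Ioi
    simp only [abs_of_pos hy, neg_mul]

open Set in
lemma integral_exp_neg_mul_abs_mul_exp {c : ℝ} (hc : 0 < c) (ξ : ℝ) :
    ∫ y : ℝ, (Real.exp (-(c * |y|)) : ℂ) * Complex.exp (Complex.I * ξ * y)
      = ((2 * c / (c ^ 2 + ξ ^ 2) : ℝ) : ℂ) := by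
  have hint : Integrable fun y : ℝ =>
      (Real.exp (-(c * |y|)) : ℂ) * Complex.exp (Complex.I * ξ * y) := by
    refine (integrable_exp_neg_mul_abs hc).mono' (by fun_prop) (Eventually.of_forall fun y => ?_)
    simp [Complex.norm_exp]
  rw [← intervalIntegral.integral_Iic_add_Ioi (b := 0) hint.integrableOn hint.integrableOn]
  have h1 : ∫ y in Iic (0 : ℝ), (Real.exp (-(c * |y|)) : ℂ) * Complex.exp (Complex.I * ξ * y)
      = 1 / (c + Complex.I * ξ) := by
    rw [setIntegral_congr_fun (g := fun y : ℝ => Complex.exp ((c + Complex.I * ξ) * y))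
      measurableSet_Iic, integral_exp_mul_complex_Iic (by simpa using hc)]
    · simp
    · intro y (hy : y ≤ 0)
      simp only [abs_of_nonpos hy]
      push_cast
      rw [← Complex.exp_add]; ring_nf
  have h2 : ∫ y in Ioi (0 : ℝ), (Real.exp (-(c * |y|)) : ℂ) * Complex.exp (Complex.I * ξ * y)
      = 1 / (c - Complex.I * ξ) := by
    rw [setIntegral_congr_fun (g := fun y : ℝ => Complex.exp ((-c + Complex.I * ξ) * y))
      measurableSet_Ioi, integral_exp_mul_complex_Ioi (by simpa using hc)]
    · rw [show (c : ℂ) - Complex.I * ξ = -(-c + Complex.I * ξ) by ring]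
      rw [div_neg, ← neg_div]
      simp
    · intro y (hy : 0 < y)
      simp only [abs_of_pos hy]
      push_cast
      rw [← Complex.exp_add]; ring_nf
  rw [h1, h2]
  have e1 : (c : ℂ) + Complex.I * ξ ≠ 0 := fun h => hc.ne' (by simpa using congrArg Complex.re h)
  have e2 : (c : ℂ) - Complex.I * ξ ≠ 0 := fun h => hc.ne' (by simpa using congrArg Complex.re h)
  have e3 : (c : ℂ) ^ 2 + ξ ^ 2 = (c + Complex.I * ξ) * (c - Complex.I * ξ) := by
    linear_combination (ξ : ℂ) ^ 2 * Complex.I_sq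
  push_cast
  rw [e3]
  field_simp
  ring

open Set in
lemma integral_Ioi_div_sq_add_sq {a b : ℝ} (ha : 0 < a) (hb : 0 < b) (hab : b ≠ a) :
    ∫ s in Ioi (0 : ℝ), s / (1 + s ^ 2) * (2 * (a * s) / ((a * s) ^ 2 + b ^ 2))
      = Real.pi / (a + b) := by
  have hp : (fun s : ℝ => s / (1 + s ^ 2) * (2 * (a * s) / ((a * s) ^ 2 + b ^ 2))) =
      fun s : ℝ => 2 * a / (a ^ 2 - b ^ 2) * (1 + s ^ 2)⁻¹
        - 2 * a / (a ^ 2 - b ^ 2) * (1 + (a / b * s) ^ 2)⁻¹ := by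
    have h3 : a ^ 2 - b ^ 2 ≠ 0 := by
      rw [sq_sub_sq]
      exact mul_ne_zero (by positivity) (sub_ne_zero.2 hab.symm)
    ext s
    have h1 : 1 + s ^ 2 ≠ 0 := by positivity
    have h2 : (a * s) ^ 2 + b ^ 2 ≠ 0 := by positivity
    have h4 : 1 + (a / b * s) ^ 2 = ((a * s) ^ 2 + b ^ 2) / b ^ 2 := by field_simp; ring
    rw [h4]
    field_simp
    ring
  have hab' : 0 < a / b := by positivity
  have i2 : Integrable fun s : ℝ => (1 + (a / b * s) ^ 2)⁻¹ :=
    integrable_inv_one_add_sq.comp_mul_left' hab'.ne'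
  rw [hp, integral_sub (integrable_inv_one_add_sq.const_mul _).integrableOn
    (i2.const_mul _).integrableOn, integral_const_mul, integral_const_mul,
    integral_comp_mul_left_Ioi (fun s : ℝ => (1 + s ^ 2)⁻¹) 0 hab', mul_zero,
    integral_Ioi_inv_one_add_sq]
  have h3 : a - b ≠ 0 := sub_ne_zero.2 hab.symm
  have h5 : a + b ≠ 0 := by positivity
  rw [Real.arctan_zero, sq_sub_sq, smul_eq_mul]
  field_simp
  ring

open Set in
lemma integrable_prod_laplaceOdd {a : ℝ} (ha : 0 < a) :
    Integrable (fun p : ℝ × ℝ => p.2 / (1 + p.2 ^ 2) * Real.exp (-(a * |p.1| * p.2)))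
      (volume.prod (volume.restrict (Ioi 0))) := by
  have hc : Continuous fun p : ℝ × ℝ => p.2 / (1 + p.2 ^ 2) * Real.exp (-(a * |p.1| * p.2)) :=
    (continuous_div_one_add_sq.comp continuous_snd).mul (by fun_prop)
  rw [integrable_prod_iff' hc.aestronglyMeasurable]
  constructor
  · filter_upwards [ae_restrict_mem measurableSet_Ioi] with s hs
    have := (integrable_exp_neg_mul_abs (mul_pos ha hs)).const_mul (s / (1 + s ^ 2))
    refine this.congr (Eventually.of_forall fun y => ?_)
    simp only; ring_nf
  · have : IntegrableOn (fun s : ℝ => 2 / a * (1 + s ^ 2)⁻¹) (Ioi 0) :=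
      (integrable_inv_one_add_sq.const_mul _).integrableOn
    refine this.congr ?_
    filter_upwards [ae_restrict_mem measurableSet_Ioi] with s hs
    have hs' : 0 < s := hs
    have h0 : ∀ y : ℝ, ‖s / (1 + s ^ 2) * Real.exp (-(a * |y| * s))‖
        = s / (1 + s ^ 2) * Real.exp (-(a * s * |y|)) := fun y => by
      rw [Real.norm_of_nonneg (by positivity)]; ring_nf
    simp_rw [h0]
    rw [integral_const_mul, integral_comp_abs (f := fun y : ℝ => Real.exp (-(a * s * y))),
      integral_exp_neg_mul (mul_pos ha hs')]
    field_simp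

lemma integrable_laplaceOdd {a : ℝ} (ha : 0 < a) :
    Integrable fun y : ℝ => laplaceOdd (a * |y|) :=
  (integrable_prod_laplaceOdd ha).integral_prod_left

open Set in
lemma integral_laplaceOdd_mul_exp {a ξ : ℝ} (ha : 0 < a) (h0 : ξ ≠ 0) (h1 : |ξ| ≠ a) :
    ∫ y : ℝ, (laplaceOdd (a * |y|) : ℂ) * Complex.exp (Complex.I * ξ * y)
      = ((Real.pi / (|ξ| + a) : ℝ) : ℂ) := by
  have hint : Integrable (fun p : ℝ × ℝ => ((p.2 / (1 + p.2 ^ 2) *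
      Real.exp (-(a * |p.1| * p.2)) : ℝ) : ℂ) * Complex.exp (Complex.I * ξ * p.1))
      (volume.prod (volume.restrict (Ioi 0))) := by
    refine (integrable_prod_laplaceOdd ha).norm.mono' ?_ (Eventually.of_forall fun p => ?_)
    · exact (integrable_prod_laplaceOdd ha).ofReal.aestronglyMeasurable.mul
        (by fun_prop : Continuous _).aestronglyMeasurable
    · rw [norm_mul, Complex.norm_real]
      simp [Complex.norm_exp]
  calc ∫ y : ℝ, (laplaceOdd (a * |y|) : ℂ) * Complex.exp (Complex.I * ξ * y)
      = ∫ y : ℝ, ∫ s in Ioi (0 : ℝ), ((s / (1 + s ^ 2) *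
          Real.exp (-(a * |y| * s)) : ℝ) : ℂ) * Complex.exp (Complex.I * ξ * y) := by
        congr 1; ext y
        rw [integral_mul_const, integral_complex_ofReal, laplaceOdd]
    _ = ∫ s in Ioi (0 : ℝ), ∫ y : ℝ, ((s / (1 + s ^ 2) *
          Real.exp (-(a * |y| * s)) : ℝ) : ℂ) * Complex.exp (Complex.I * ξ * y) :=
        integral_integral_swap hint
    _ = ∫ s in Ioi (0 : ℝ),
          ((s / (1 + s ^ 2) * (2 * (a * s) / ((a * s) ^ 2 + |ξ| ^ 2)) : ℝ) : ℂ) := by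
        refine setIntegral_congr_fun measurableSet_Ioi fun s (hs : 0 < s) => ?_
        rw [Complex.ofReal_mul, sq_abs, ← integral_exp_neg_mul_abs_mul_exp (mul_pos ha hs) ξ,
          ← integral_const_mul]
        congr 1; ext y
        rw [show a * |y| * s = a * s * |y| by ring]
        push_cast; ring
    _ = _ := by
        rw [integral_complex_ofReal, integral_Ioi_div_sq_add_sq ha (abs_pos.2 h0) h1, add_comm]

open FourierTransform in
lemma SchwartzMap.integral_exp_eq_fourier (f : SchwartzMap ℝ ℂ) (ξ : ℝ) :
    ∫ y : ℝ, f y * Complex.exp (Complex.I * ξ * y) = (𝓕 f) (-(1 / (2 * Real.pi)) * ξ) := by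
  rw [SchwartzMap.fourier_coe, Real.fourier_real_eq_integral_exp_smul]
  congr 1; ext y
  rw [smul_eq_mul, mul_comm]
  congr 2
  push_cast
  have : (Real.pi : ℂ) ≠ 0 := by exact_mod_cast Real.pi_ne_zero
  field_simp

lemma SchwartzMap.integrable_integral_exp (f : SchwartzMap ℝ ℂ) :
    Integrable fun ξ : ℝ => ∫ y : ℝ, f y * Complex.exp (Complex.I * ξ * y) := by
  simp_rw [f.integral_exp_eq_fourier]
  exact (SchwartzMap.integrable _).comp_mul_left' (by simp [Real.pi_ne_zero])

open FourierTransform in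
lemma SchwartzMap.integral_integral_exp_mul_exp (f : SchwartzMap ℝ ℂ) (z : ℝ) :
    ∫ ξ : ℝ, (∫ y : ℝ, f y * Complex.exp (Complex.I * ξ * y)) * Complex.exp (-(Complex.I * ξ * z))
      = 2 * Real.pi * f z := by
  have hpi : (Real.pi : ℂ) ≠ 0 := by exact_mod_cast Real.pi_ne_zero
  have hinv : (𝓕⁻ (𝓕 f)) z = f z := by rw [FourierTransform.fourierInv_fourier_eq]
  rw [SchwartzMap.fourierInv_coe, Real.fourierInv_eq'] at hinv
  simp_rw [f.integral_exp_eq_fourier]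
  have := Measure.integral_comp_mul_left (fun v : ℝ => (𝓕 f) v *
    Complex.exp (2 * Real.pi * v * z * Complex.I)) (-(1 / (2 * Real.pi)))
  calc _ = ∫ ξ : ℝ, (𝓕 f) (-(1 / (2 * Real.pi)) * ξ) * Complex.exp (2 * Real.pi *
          ((-(1 / (2 * Real.pi)) * ξ : ℝ) : ℂ) * z * Complex.I) := by
        congr 1; ext ξ
        congr 2
        push_cast
        field_simp
    _ = _ := by
        rw [this, ← hinv]
        have habs : |(-(1 / (2 * Real.pi)))⁻¹| = 2 * Real.pi := by
          rw [inv_neg, abs_neg, one_div, inv_inv, abs_of_pos Real.two_pi_pos]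
        rw [habs, Complex.real_smul]
        push_cast
        congr 2; ext v
        rw [smul_eq_mul, mul_comm]
        congr 2
        simp [mul_comm z v]
        ring

/-- for a Schwartz function `f` with Fourier transform
`f̃(ξ) = ∫ f(x) e^{iξx} dx`, the inverse transform of `[a/(|ξ|+a)]·f̃(ξ)`
equals `-(a/π)·(T_a ∗ f)(x)`. -/
theorem stmt18 (a : ℝ) (ha : 0 < a) (f : SchwartzMap ℝ ℝ) (x : ℝ) :
    (1 / (2 * (Real.pi : ℂ))) *
        ∫ ξ : ℝ, ((a / (|ξ| + a) : ℝ) : ℂ) *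
          (∫ y : ℝ, (f y : ℂ) * Complex.exp (Complex.I * ξ * y)) *
          Complex.exp (-(Complex.I * ξ * x))
      = ((-(a / Real.pi) * ∫ t : ℝ, Tker a (x - t) * f t : ℝ) : ℂ) := by
  have hpi : (Real.pi : ℂ) ≠ 0 := by exact_mod_cast Real.pi_ne_zero
  set g : SchwartzMap ℝ ℂ := f.postcompCLM Complex.ofRealCLM with hg
  have hgf : ∀ y, (f y : ℂ) = g y := fun y => by simp [hg]
  set G : ℝ → ℂ := fun ξ => ∫ y : ℝ, g y * Complex.exp (Complex.I * ξ * y) with hG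
  have hGint : Integrable G := g.integrable_integral_exp
  have hK := (integrable_laplaceOdd ha).ofReal (𝕜 := ℂ)
  have hint : Integrable (fun p : ℝ × ℝ => (laplaceOdd (a * |p.2|) : ℂ) *
      Complex.exp (Complex.I * p.1 * p.2) * (G p.1 * Complex.exp (-(Complex.I * p.1 * x))))
      (volume.prod volume) := by
    have hprod : Integrable (fun p : ℝ × ℝ => G p.1 * (laplaceOdd (a * |p.2|) : ℂ))
      (volume.prod volume) := hGint.mul_prod hK
    have hexp : Continuous fun p : ℝ × ℝ =>
        Complex.exp (Complex.I * p.1 * p.2) * Complex.exp (-(Complex.I * p.1 * x)) := by fun_prop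
    refine (hprod.mul_bdd (c := 1) hexp.aestronglyMeasurable
      (Eventually.of_forall fun p => ?_)).congr (Eventually.of_forall fun p => ?_)
    · simp [Complex.norm_exp]
    · simp only; ring
  have hmult : (fun ξ : ℝ => ((a / (|ξ| + a) : ℝ) : ℂ) *
      (∫ y : ℝ, (f y : ℂ) * Complex.exp (Complex.I * ξ * y)) * Complex.exp (-(Complex.I * ξ * x)))
      =ᵐ[volume] fun ξ : ℝ => (a / Real.pi : ℂ) * ∫ y : ℝ, (laplaceOdd (a * |y|) : ℂ) *
        Complex.exp (Complex.I * ξ * y) * (G ξ * Complex.exp (-(Complex.I * ξ * x))) := by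
    have hne : ∀ c : ℝ, ∀ᵐ ξ : ℝ, ξ ≠ c := fun c => by simp [ae_iff]
    filter_upwards [hne 0, hne a, hne (-a)] with ξ h0 h1 h2
    have h3 : |ξ| ≠ a := fun h => by
      rcases abs_eq ha.le |>.1 h with h | h <;> contradiction
    rw [integral_mul_const, integral_laplaceOdd_mul_exp ha h0 h3]
    simp_rw [hgf]
    have : ((|ξ| : ℝ) : ℂ) + a ≠ 0 := by exact_mod_cast (by positivity : |ξ| + a ≠ 0)
    push_cast
    field_simp
    rfl
  have hinner : ∀ y : ℝ, ∫ ξ : ℝ, (laplaceOdd (a * |y|) : ℂ) *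
      Complex.exp (Complex.I * ξ * y) * (G ξ * Complex.exp (-(Complex.I * ξ * x)))
      = 2 * Real.pi * ((laplaceOdd (a * |y|) * f (x - y) : ℝ) : ℂ) := fun y => by
    have := g.integral_integral_exp_mul_exp (x - y)
    rw [Complex.ofReal_mul, hgf, mul_left_comm, ← this, ← integral_const_mul]
    congr 1; ext ξ
    have he : Complex.exp (-(Complex.I * ξ * ((x - y : ℝ) : ℂ))) =
        Complex.exp (Complex.I * ξ * y) * Complex.exp (-(Complex.I * ξ * x)) := by
      rw [← Complex.exp_add]; push_cast; ring_nf
    rw [he, hG]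
    ring
  have hreal : ∫ t : ℝ, Tker a (x - t) * f t = -∫ y : ℝ, laplaceOdd (a * |y|) * f (x - y) := by
    rw [← integral_sub_left_eq_self (fun t => Tker a (x - t) * f t) volume x, ← integral_neg]
    refine integral_congr_ae ?_
    have hne : ∀ᵐ y : ℝ, y ≠ 0 := by simp [ae_iff]
    filter_upwards [hne] with y hy
    rw [sub_sub_cancel, Tker_eq ha hy]
    ring
  rw [integral_congr_ae hmult, integral_const_mul, integral_integral_swap hint]
  simp_rw [hinner]
  rw [integral_const_mul, integral_complex_ofReal, hreal]
  push_cast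
  field_simp
end

section
/- Let a > 0 and let f : ℝ → ℝ be a Schwartz function with Fourier transform f̃(ξ) = ∫_{−∞}^{∞} f(x)·e^{iξx} dx. Then for every x ∈ ℝ, (1/2π)·∫_{−∞}^{∞} [−|ξ|/(|ξ| + a)]·f̃(ξ)·e^{−iξx} dξ = (1/π)·∫_{−∞}^{∞} S_a(x − t)·f'(t) dt. -/
open Filter MeasureTheory Topology

lemma integral_div_id_eq {φ Φ : ℝ → ℝ} (hφ : Continuous φ) (hΦ : ∀ t, HasDerivAt Φ (φ t) t)
    {p q : ℝ} (hp : 0 < p) (hpq : p ≤ q) :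
    ∫ t in p..q, φ t / t = Φ q / q - Φ p / p + ∫ t in p..q, Φ t / t ^ 2 := by
  have hpos : ∀ t ∈ Set.uIcc p q, 0 < t := fun t ht => by
    rw [Set.uIcc_of_le hpq] at ht; exact hp.trans_le ht.1
  have h := intervalIntegral.integral_mul_deriv_eq_deriv_mul (a := p) (b := q)
    (u := fun t : ℝ => t⁻¹) (v := Φ) (u' := fun t => -(t ^ 2)⁻¹) (v' := φ)
    (fun t ht => hasDerivAt_inv (hpos t ht).ne') (fun t _ => hΦ t)
    (ContinuousOn.intervalIntegrable (ContinuousOn.neg (ContinuousOn.inv₀ (by fun_prop)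
      (fun t ht => pow_ne_zero 2 (hpos t ht).ne'))))
    (hφ.intervalIntegrable _ _)
  have e1 : ∫ t in p..q, φ t / t = ∫ t in p..q, t⁻¹ * φ t := by
    congr 1; ext t; ring
  have e2 : ∫ t in p..q, -(t ^ 2)⁻¹ * Φ t = -∫ t in p..q, Φ t / t ^ 2 := by
    rw [← intervalIntegral.integral_neg]; congr 1; ext t; ring
  rw [e1, h, e2]; ring

lemma abs_integral_div_id_le {φ Φ : ℝ → ℝ} (hφ : Continuous φ)
    (hΦ : ∀ t, HasDerivAt Φ (φ t) t) {M : ℝ} (hM : ∀ t, |Φ t| ≤ M) {p q : ℝ} (hp : 0 < p)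
    (hpq : p ≤ q) : |∫ t in p..q, φ t / t| ≤ 2 * M / p := by
  have hq : 0 < q := hp.trans_le hpq
  have hpos : ∀ t ∈ Set.uIcc p q, 0 < t := fun t ht => by
    rw [Set.uIcc_of_le hpq] at ht; exact hp.trans_le ht.1
  have hint : IntervalIntegrable (fun t : ℝ => M * (t ^ 2)⁻¹) volume p q :=
    ContinuousOn.intervalIntegrable (continuousOn_const.mul (ContinuousOn.inv₀ (by fun_prop)
      (fun t ht => pow_ne_zero 2 (hpos t ht).ne')))
  have hval : ∫ t in p..q, M * (t ^ 2)⁻¹ = M / p - M / q := by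
    rw [intervalIntegral.integral_eq_sub_of_hasDerivAt (f := fun t => -(M * t⁻¹)) _ hint]
    · ring
    · intro t ht
      have := ((hasDerivAt_inv (hpos t ht).ne').const_mul M).fun_neg
      rwa [mul_neg, neg_neg] at this
  have h2 : |∫ t in p..q, Φ t / t ^ 2| ≤ M / p - M / q := by
    rw [← hval, ← Real.norm_eq_abs]
    refine intervalIntegral.norm_integral_le_of_norm_le hpq (ae_of_all _ fun t ht => ?_) hint
    rw [Real.norm_eq_abs, abs_div, abs_of_nonneg (sq_nonneg t), div_eq_mul_inv]
    exact mul_le_mul_of_nonneg_right (hM t) (by positivity)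
  have h3 : |Φ q / q| ≤ M / q := by
    rw [abs_div, abs_of_pos hq]; gcongr; exact hM q
  have h4 : |Φ p / p| ≤ M / p := by
    rw [abs_div, abs_of_pos hp]; gcongr; exact hM p
  rw [integral_div_id_eq hφ hΦ hp hpq]
  rw [abs_le] at *
  have : 2 * M / p = M / p + M / p := by ring
  constructor <;> linarith

lemma exists_tendsto_integral_div_id {φ Φ : ℝ → ℝ} (hφ : Continuous φ)
    (hΦ : ∀ t, HasDerivAt Φ (φ t) t) {M : ℝ} (hM : ∀ t, |Φ t| ≤ M) {p : ℝ} (hp : 0 < p) :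
    ∃ L, Tendsto (fun R => ∫ t in p..R, φ t / t) atTop (𝓝 L) := by
  have hΦc : Continuous Φ := continuous_iff_continuousAt.2 fun t => (hΦ t).continuousAt
  have hint : IntegrableOn (fun t => Φ t / t ^ 2) (Set.Ioi p) := by
    have h := (integrableOn_Ioi_rpow_of_lt (a := -2) (by norm_num) hp).const_mul M
    refine Integrable.mono' h ?_ ?_
    · exact (hΦc.measurable.div (by fun_prop)).aestronglyMeasurable
    · filter_upwards [ae_restrict_mem measurableSet_Ioi] with t ht
      have ht0 : 0 < t := hp.trans ht
      rw [Real.rpow_neg ht0.le, Real.norm_eq_abs, abs_div, abs_of_nonneg (sq_nonneg t),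
        div_eq_mul_inv]
      norm_num
      exact mul_le_mul_of_nonneg_right (hM t) (by positivity)
  have h1 := intervalIntegral_tendsto_integral_Ioi p hint tendsto_id
  have h2 : Tendsto (fun R => Φ R / R) atTop (𝓝 0) := by
    refine squeeze_zero_norm' (a := fun R => M / R) ?_ (tendsto_const_nhds.div_atTop tendsto_id)
    filter_upwards [eventually_gt_atTop 0] with R hR
    rw [Real.norm_eq_abs, abs_div, abs_of_pos hR]; gcongr; exact hM R
  refine ⟨_, ((h2.sub_const (Φ p / p)).add h1).congr' ?_⟩
  filter_upwards [eventually_ge_atTop p] with R hR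
  exact (integral_div_id_eq hφ hΦ hp hR).symm

lemma tendsto_integral_sin_div {y : ℝ} (hy : 0 < y) :
    Tendsto (fun R => ∫ t in y..R, Real.sin t / t) atTop (𝓝 (-si y)) := by
  rw [si, neg_neg]
  refine tendsto_nhds_limUnder (exists_tendsto_integral_div_id (Φ := fun t => -Real.cos t)
    (M := 1) Real.continuous_sin (fun t => ?_) (fun t => ?_) hy)
  · simpa using (Real.hasDerivAt_cos t).fun_neg
  · rw [abs_neg]; exact Real.abs_cos_le_one t

lemma tendsto_integral_cos_div {y : ℝ} (hy : 0 < y) :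
    Tendsto (fun R => ∫ t in y..R, Real.cos t / t) atTop (𝓝 (-ci y)) := by
  rw [ci, neg_neg]
  exact tendsto_nhds_limUnder (exists_tendsto_integral_div_id (Φ := Real.sin)
    (M := 1) Real.continuous_cos Real.hasDerivAt_sin Real.abs_sin_le_one hy)

/-- The truncated kernel `∫_0^R sin (ξ u) / (|ξ| + a) dξ`, whose limit is `-Sker a u`. -/
noncomputable def truncSker (a R u : ℝ) : ℝ := ∫ ξ in (0 : ℝ)..R, Real.sin (ξ * u) / (|ξ| + a)

lemma truncSker_neg (a R u : ℝ) : truncSker a R (-u) = -truncSker a R u := by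
  simp only [truncSker, ← intervalIntegral.integral_neg]
  congr 1; ext ξ; rw [mul_neg, Real.sin_neg]; ring

lemma continuous_truncSker {a : ℝ} (ha : 0 < a) (R : ℝ) : Continuous (truncSker a R) := by
  unfold truncSker
  refine intervalIntegral.continuous_parametric_intervalIntegral_of_continuous' ?_ 0 R
  exact Continuous.div (by fun_prop) (by fun_prop) fun x => by positivity

lemma integral_sin_div_abs_add {a p q : ℝ} (hp : 0 ≤ p) (hpq : p ≤ q) (u : ℝ) :
    ∫ ξ in p..q, Real.sin (ξ * u) / (|ξ| + a) =
      ∫ t in (p + a)..(q + a), Real.sin ((t - a) * u) / t := by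
  rw [← intervalIntegral.integral_comp_add_right (fun t => Real.sin ((t - a) * u) / t) a]
  refine intervalIntegral.integral_congr fun ξ hξ => ?_
  rw [Set.uIcc_of_le hpq] at hξ
  simp [abs_of_nonneg (hp.trans hξ.1)]

lemma abs_truncSker_le_of_pos {a R u : ℝ} (ha : 0 < a) (hR : 0 ≤ R) (hu : 0 < u) :
    |truncSker a R u| ≤ 3 := by
  have hc : Continuous fun ξ : ℝ => Real.sin (ξ * u) / (|ξ| + a) :=
    Continuous.div (by fun_prop) (by fun_prop) fun x => by positivity
  set m := min R u⁻¹ with hm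
  have hm0 : 0 ≤ m := le_min hR (by positivity)
  have hmR : m ≤ R := min_le_left _ _
  have h1 : |∫ ξ in (0 : ℝ)..m, Real.sin (ξ * u) / (|ξ| + a)| ≤ 1 := by
    have h : ‖∫ ξ in (0 : ℝ)..m, Real.sin (ξ * u) / (|ξ| + a)‖ ≤ u * |m - 0| := by
      refine intervalIntegral.norm_integral_le_of_norm_le_const fun ξ hξ => ?_
      rw [Set.uIoc_of_le hm0] at hξ
      have h0 : 0 < ξ := hξ.1
      rw [Real.norm_eq_abs, abs_div, abs_of_pos h0, abs_of_pos (by positivity : 0 < ξ + a),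
        div_le_iff₀ (by positivity)]
      have := Real.abs_sin_le_abs (x := ξ * u)
      rw [abs_of_pos (by positivity : 0 < ξ * u)] at this
      nlinarith
    rw [sub_zero, abs_of_nonneg hm0, Real.norm_eq_abs] at h
    refine h.trans ?_
    calc u * m ≤ u * u⁻¹ := by gcongr; exact min_le_right _ _
      _ = 1 := mul_inv_cancel₀ hu.ne'
  have h2 : |∫ ξ in m..R, Real.sin (ξ * u) / (|ξ| + a)| ≤ 2 := by
    rcases le_total R u⁻¹ with h | h
    · rw [hm, min_eq_left h]; simp
    · have hmu : m = u⁻¹ := min_eq_right h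
      rw [integral_sin_div_abs_add hm0 hmR]
      refine (abs_integral_div_id_le (φ := fun t => Real.sin ((t - a) * u))
        (Φ := fun t => -Real.cos ((t - a) * u) / u) (M := u⁻¹) (by fun_prop) (fun t => ?_)
        (fun t => ?_) (by positivity) (by linarith)).trans ?_
      · have := (((((hasDerivAt_id t).sub_const a).mul_const u).cos).fun_neg).div_const u
        rw [one_mul, neg_mul, neg_neg, mul_div_cancel_right₀ _ hu.ne'] at this
        exact this
      · rw [abs_div, abs_neg, abs_of_pos hu, div_eq_mul_inv]
        exact mul_le_of_le_one_left (by positivity) (Real.abs_cos_le_one _)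
      · rw [hmu, div_le_iff₀ (by positivity)]; linarith
  rw [truncSker, ← intervalIntegral.integral_add_adjacent_intervals
    (hc.intervalIntegrable 0 m) (hc.intervalIntegrable m R)]
  exact (abs_add_le _ _).trans (by linarith)

lemma abs_truncSker_le {a R : ℝ} (ha : 0 < a) (hR : 0 ≤ R) (u : ℝ) :
    |truncSker a R u| ≤ 3 := by
  rcases lt_trichotomy u 0 with hu | rfl | hu
  · rw [← neg_neg u, truncSker_neg, abs_neg]
    exact abs_truncSker_le_of_pos ha hR (by linarith)
  · simp [truncSker]
  · exact abs_truncSker_le_of_pos ha hR hu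

lemma tendsto_truncSker_of_pos {a u : ℝ} (ha : 0 < a) (hu : 0 < u) :
    Tendsto (fun R => truncSker a R u) atTop (𝓝 (-Sker a u)) := by
  have hau : 0 < a * u := by positivity
  have hR : Tendsto (fun R : ℝ => (R + a) * u) atTop atTop :=
    (tendsto_atTop_add_const_right _ a tendsto_id).atTop_mul_const hu
  have h := (((tendsto_integral_sin_div hau).comp hR).const_mul (Real.cos (a * u))).sub
    (((tendsto_integral_cos_div hau).comp hR).const_mul (Real.sin (a * u)))
  have e : -Sker a u =
      Real.cos (a * u) * -si (a * u) - Real.sin (a * u) * -ci (a * u) := by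
    rw [Sker, Real.sign_of_pos hu, abs_of_pos hu]; ring
  rw [e]
  refine h.congr' ?_
  filter_upwards [eventually_ge_atTop 0] with R hR
  have hle : a * u ≤ (R + a) * u := by nlinarith
  have hpos : ∀ t ∈ Set.uIcc (a * u) ((R + a) * u), t ≠ 0 := fun t ht => by
    rw [Set.uIcc_of_le hle] at ht; exact (hau.trans_le ht.1).ne'
  rw [truncSker, integral_sin_div_abs_add le_rfl hR, zero_add]
  simp only [Function.comp]
  rw [← intervalIntegral.integral_const_mul, ← intervalIntegral.integral_const_mul,
    ← intervalIntegral.integral_sub,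
    ← intervalIntegral.mul_integral_comp_mul_right, ← intervalIntegral.integral_const_mul]
  · refine intervalIntegral.integral_congr fun t ht => ?_
    have : (t - a) * u = t * u - a * u := by ring
    simp only [this, Real.sin_sub]
    rw [Set.uIcc_of_le (by linarith)] at ht
    have : 0 < t := ha.trans_le ht.1
    field_simp
  · exact ContinuousOn.intervalIntegrable
      (continuousOn_const.mul (ContinuousOn.div (by fun_prop) (by fun_prop) hpos))
  · exact ContinuousOn.intervalIntegrable
      (continuousOn_const.mul (ContinuousOn.div (by fun_prop) (by fun_prop) hpos))

lemma Sker_neg (a u : ℝ) : Sker a (-u) = -Sker a u := by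
  simp only [Sker, abs_neg, Real.sign_neg, neg_mul]

lemma tendsto_truncSker {a : ℝ} (ha : 0 < a) (u : ℝ) :
    Tendsto (fun R => truncSker a R u) atTop (𝓝 (-Sker a u)) := by
  rcases lt_trichotomy u 0 with hu | rfl | hu
  · have h := (tendsto_truncSker_of_pos ha (neg_pos.2 hu)).neg
    simpa only [truncSker_neg, Sker_neg, neg_neg] using h
  · simp [truncSker, Sker]
  · exact tendsto_truncSker_of_pos ha hu

lemma SchwartzMap.integrable_deriv (f : SchwartzMap ℝ ℝ) : Integrable (deriv f) := by
  have := (SchwartzMap.derivCLM ℝ ℝ f).integrable (μ := volume)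
  exact this.congr (ae_of_all _ fun t => by simp)

lemma tendsto_integral_truncSker {a : ℝ} (ha : 0 < a) {g : ℝ → ℝ} (hg : Integrable g) (x : ℝ) :
    Tendsto (fun R => ∫ t, -truncSker a R (x - t) * g t) atTop
      (𝓝 (∫ t, Sker a (x - t) * g t)) := by
  refine tendsto_integral_filter_of_dominated_convergence (fun t => 3 * |g t|) ?_ ?_
    (hg.abs.const_mul 3) ?_
  · refine Eventually.of_forall fun R => ?_
    exact AEStronglyMeasurable.mul (((continuous_truncSker ha R).comp
      (continuous_const.sub continuous_id)).neg.aestronglyMeasurable) hg.aestronglyMeasurable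
  · filter_upwards [eventually_ge_atTop 0] with R hR
    refine ae_of_all _ fun t => ?_
    rw [Real.norm_eq_abs, abs_mul, abs_neg]
    exact mul_le_mul_of_nonneg_right (abs_truncSker_le ha hR _) (abs_nonneg _)
  · refine ae_of_all _ fun t => ?_
    simpa using ((tendsto_truncSker ha (x - t)).neg).mul_const (g t)

lemma mul_integral_mul_exp (f : SchwartzMap ℝ ℝ) (ξ : ℝ) :
    (ξ : ℂ) * ∫ y : ℝ, (f y : ℂ) * Complex.exp (Complex.I * ξ * y) =
      Complex.I * ∫ y : ℝ, ((deriv f y : ℝ) : ℂ) * Complex.exp (Complex.I * ξ * y) := by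
  have hb : ∀ (g : ℝ → ℝ), Integrable g →
      Integrable fun y : ℝ => (g y : ℂ) * Complex.exp (Complex.I * ξ * y) := fun g hg => by
    refine hg.ofReal.mul_bdd (c := 1) (by fun_prop) (ae_of_all _ fun y => ?_)
    have : Complex.I * ξ * y = ((ξ * y : ℝ) : ℂ) * Complex.I := by push_cast; ring
    rw [this, Complex.norm_exp_ofReal_mul_I]
  have hexp : ∀ y : ℝ, HasDerivAt (fun y : ℝ => Complex.exp (Complex.I * ξ * y))
      (Complex.exp (Complex.I * ξ * y) * (Complex.I * ξ)) y := fun y => by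
    have := (((hasDerivAt_id (y : ℂ)).const_mul (Complex.I * (ξ : ℂ))).cexp).comp_ofReal
    simpa using this
  have h := integral_mul_deriv_eq_deriv_mul_of_integrable
    (u := fun y : ℝ => (f y : ℂ)) (u' := fun y => ((deriv f y : ℝ) : ℂ))
    (v := fun y : ℝ => Complex.exp (Complex.I * ξ * y))
    (v' := fun y : ℝ => Complex.exp (Complex.I * ξ * y) * (Complex.I * ξ))
    (fun y _ => (f.differentiable y).hasDerivAt.ofReal_comp) (fun y _ => hexp y)
    (by
      have := (hb f f.integrable).mul_const (Complex.I * ξ)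
      simpa only [Pi.mul_def, mul_assoc] using this)
    (hb _ f.integrable_deriv) (hb _ f.integrable)
  have e : ∫ y : ℝ, (f y : ℂ) * (Complex.exp (Complex.I * ξ * y) * (Complex.I * ξ)) =
      (∫ y : ℝ, (f y : ℂ) * Complex.exp (Complex.I * ξ * y)) * (Complex.I * ξ) := by
    rw [← integral_mul_const]; congr 1; ext y; ring
  rw [e] at h
  linear_combination (-Complex.I) * h +
    (∫ y : ℝ, (f y : ℂ) * Complex.exp (Complex.I * ξ * y)) * ξ * Complex.I_sq

lemma abs_sign_div_le {a : ℝ} (ha : 0 < a) (ξ : ℝ) : |(|ξ| / ξ / (|ξ| + a))| ≤ a⁻¹ := by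
  rw [abs_div, abs_div, abs_abs, abs_of_pos (by positivity : 0 < |ξ| + a), inv_eq_one_div]
  have := abs_nonneg ξ
  exact div_le_div₀ zero_le_one (div_self_le_one _) ha (by linarith)

lemma norm_kernel_le {a : ℝ} (ha : 0 < a) (ξ u : ℝ) :
    ‖((|ξ| / ξ / (|ξ| + a) : ℝ) : ℂ) * Complex.exp (-(Complex.I * ξ * u))‖ ≤ a⁻¹ := by
  have : -(Complex.I * ξ * u) = ((-(ξ * u) : ℝ) : ℂ) * Complex.I := by push_cast; ring
  rw [norm_mul, this, Complex.norm_exp_ofReal_mul_I, mul_one, Complex.norm_real]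
  exact abs_sign_div_le ha ξ

lemma integral_kernel {a R : ℝ} (ha : 0 < a) (hR : 0 ≤ R) (u : ℝ) :
    ∫ ξ in (-R)..R, ((|ξ| / ξ / (|ξ| + a) : ℝ) : ℂ) * Complex.exp (-(Complex.I * ξ * u)) =
      -2 * Complex.I * (truncSker a R u : ℂ) := by
  set g : ℝ → ℂ := fun ξ =>
    ((|ξ| / ξ / (|ξ| + a) : ℝ) : ℂ) * Complex.exp (-(Complex.I * ξ * u)) with hg
  have hi : ∀ p q, IntervalIntegrable g volume p q := fun p q => by
    refine (intervalIntegrable_const (c := a⁻¹)).mono_fun ?_ (ae_of_all _ fun ξ => ?_)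
    · exact Measurable.aestronglyMeasurable (by fun_prop)
    · rw [Real.norm_of_nonneg (by positivity)]; exact norm_kernel_le ha ξ u
  rw [← intervalIntegral.integral_add_adjacent_intervals (hi (-R) 0) (hi 0 R)]
  have h := intervalIntegral.integral_comp_neg (a := 0) (b := R) g
  rw [neg_zero] at h
  have hi' : IntervalIntegrable (fun ξ => g (-ξ)) volume 0 R := by
    refine (intervalIntegrable_const (c := a⁻¹)).mono_fun ?_ (ae_of_all _ fun ξ => ?_)
    · exact Measurable.aestronglyMeasurable (by fun_prop)
    · rw [Real.norm_of_nonneg (by positivity)]; exact norm_kernel_le ha (-ξ) u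
  rw [← h, ← intervalIntegral.integral_add hi' (hi 0 R), truncSker,
    ← intervalIntegral.integral_ofReal, ← intervalIntegral.integral_const_mul]
  refine intervalIntegral.integral_congr_ae (ae_of_all _ fun ξ hξ => ?_)
  rw [Set.uIoc_of_le hR] at hξ
  have h0 : 0 < ξ := hξ.1
  have e1 : -(Complex.I * ((-ξ : ℝ) : ℂ) * u) = ((ξ * u : ℝ) : ℂ) * Complex.I := by
    push_cast; ring
  have e2 : -(Complex.I * (ξ : ℂ) * u) = ((-(ξ * u) : ℝ) : ℂ) * Complex.I := by
    push_cast; ring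
  have e3 : |ξ| / -ξ / (|ξ| + a) = -(|ξ| + a)⁻¹ := by
    rw [abs_of_pos h0]; field_simp
  have e4 : |ξ| / ξ / (|ξ| + a) = (|ξ| + a)⁻¹ := by
    rw [abs_of_pos h0]; field_simp
  simp only [hg, abs_neg]
  rw [e1, e2, e3, e4, Complex.exp_mul_I, Complex.exp_mul_I]
  simp only [← Complex.ofReal_cos, ← Complex.ofReal_sin, Real.cos_neg, Real.sin_neg]
  push_cast
  ring

lemma symbol_mul_fourier_eq {a : ℝ} (f : SchwartzMap ℝ ℝ) (x ξ : ℝ) :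
    ((-|ξ| / (|ξ| + a) : ℝ) : ℂ) *
        (∫ y : ℝ, (f y : ℂ) * Complex.exp (Complex.I * ξ * y)) *
        Complex.exp (-(Complex.I * ξ * x)) =
      -Complex.I * ∫ t : ℝ, ((deriv f t : ℝ) : ℂ) *
        (((|ξ| / ξ / (|ξ| + a) : ℝ) : ℂ) * Complex.exp (-(Complex.I * ξ * (x - t : ℝ)))) := by
  have hs : -|ξ| / (|ξ| + a) = -(|ξ| / ξ / (|ξ| + a)) * ξ := by
    rcases eq_or_ne ξ 0 with rfl | h
    · simp
    · field_simp
  have hint : ∫ t : ℝ, ((deriv f t : ℝ) : ℂ) *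
        (((|ξ| / ξ / (|ξ| + a) : ℝ) : ℂ) * Complex.exp (-(Complex.I * ξ * (x - t : ℝ)))) =
      ((|ξ| / ξ / (|ξ| + a) : ℝ) : ℂ) * Complex.exp (-(Complex.I * ξ * x)) *
        ∫ t : ℝ, ((deriv f t : ℝ) : ℂ) * Complex.exp (Complex.I * ξ * t) := by
    rw [← integral_const_mul]
    congr 1; ext t
    have : -(Complex.I * ξ * (x - t : ℝ)) = -(Complex.I * ξ * x) + Complex.I * ξ * t := by
      push_cast; ring
    rw [this, Complex.exp_add]; ring
  rw [hint, hs, Complex.ofReal_mul, Complex.ofReal_neg]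
  linear_combination (-((|ξ| / ξ / (|ξ| + a) : ℝ) : ℂ) * Complex.exp (-(Complex.I * ξ * x))) *
    mul_integral_mul_exp f ξ

lemma integral_symbol_mul_fourier {a R : ℝ} (ha : 0 < a) (hR : 0 ≤ R) (f : SchwartzMap ℝ ℝ)
    (x : ℝ) :
    ∫ ξ in (-R)..R, ((-|ξ| / (|ξ| + a) : ℝ) : ℂ) *
        (∫ y : ℝ, (f y : ℂ) * Complex.exp (Complex.I * ξ * y)) *
        Complex.exp (-(Complex.I * ξ * x)) =
      ((2 * ∫ t, -truncSker a R (x - t) * deriv f t : ℝ) : ℂ) := by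
  simp only [symbol_mul_fourier_eq]
  have hint : Integrable (Function.uncurry fun (ξ t : ℝ) => ((deriv f t : ℝ) : ℂ) *
      (((|ξ| / ξ / (|ξ| + a) : ℝ) : ℂ) * Complex.exp (-(Complex.I * ξ * (x - t : ℝ)))))
      ((volume.restrict (Set.uIoc (-R) R)).prod volume) := by
    have : IsFiniteMeasure (volume.restrict (Set.uIoc (-R) R)) := by
      rw [Set.uIoc]; infer_instance
    refine Integrable.mul_bdd (c := a⁻¹)
      (Integrable.comp_snd (f := fun t => ((deriv f t : ℝ) : ℂ)) f.integrable_deriv.ofReal _) ?_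
      (ae_of_all _ fun p => norm_kernel_le ha p.1 (x - p.2))
    exact Measurable.aestronglyMeasurable (by fun_prop)
  rw [intervalIntegral.integral_const_mul, intervalIntegral_integral_swap hint]
  simp only [intervalIntegral.integral_const_mul, integral_kernel ha hR]
  rw [Complex.ofReal_mul, ← integral_complex_ofReal, ← integral_const_mul, ← integral_const_mul]
  congr 1; ext t
  push_cast
  linear_combination (2 * ((deriv f t : ℝ) : ℂ) * (truncSker a R (x - t) : ℂ)) * Complex.I_sq

/-- for a Schwartz function `f` with Fourier transform
`f̃(ξ) = ∫ f(x) e^{iξx} dx`, the (improper) inverse transform of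
`[-|ξ|/(|ξ|+a)]·f̃(ξ)` equals `(1/π)·(S_a ∗ f')(x)`. -/
theorem stmt19 (a : ℝ) (ha : 0 < a) (f : SchwartzMap ℝ ℝ) (x : ℝ) :
    Tendsto
      (fun R : ℝ => (1 / (2 * (Real.pi : ℂ))) *
        ∫ ξ in (-R)..R, ((-|ξ| / (|ξ| + a) : ℝ) : ℂ) *
          (∫ y : ℝ, (f y : ℂ) * Complex.exp (Complex.I * ξ * y)) *
          Complex.exp (-(Complex.I * ξ * x)))
      atTop
      (nhds (((1 / Real.pi) * ∫ t : ℝ, Sker a (x - t) * deriv f t : ℝ) : ℂ)) := by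
  have h := ((tendsto_integral_truncSker ha f.integrable_deriv x).const_mul (1 / Real.pi))
  refine ((Complex.continuous_ofReal.tendsto _).comp h).congr' ?_
  filter_upwards [eventually_ge_atTop 0] with R hR
  rw [integral_symbol_mul_fourier ha hR]
  simp only [Function.comp]
  push_cast
  field_simp
end
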